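/- Let h₁, h₂ ∈ K̄[z] be nonzero polynomials, at most one of which has odd degree, such that every root of h₁ in K̄ has valuation > 0 and every root of h₂ in K̄ has valuation < 0. Let h_i = q_i² + ρ_i (i = 1, 2) be good part-square decompositions and set t_i := v(ρ_i) − v(h_i). Assume min{t₁, t₂} < 2v(2). Put h := h₁h₂, q := q₁q₂, ρ := h − q² and t := v(ρ) − v(h). Then h = q² + ρ is a part-square decomposition, t = min{t₁, t₂}, and this decomposition of h is good. -/

import Mathlib

open Polynomial

/-- The *Gauss valuation* of a polynomial: the minimum of the valuations of its
coefficients (with value `⊤ = +∞` for the zero polynomial). -/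
noncomputable def gaussVal {Kbar : Type*} [Field Kbar]
    (v : AddValuation Kbar (WithTop ℚ)) (h : Kbar[X]) : WithTop ℚ :=
  h.support.inf fun i => v (h.coeff i)

/-- `h = q² + ρ` is a *part-square decomposition* of `h`:
`deg q ≤ ⌈deg h / 2⌉`, encoded as `2 * deg q ≤ deg h + 1` (`q = 0` is allowed). -/
def IsPSD {Kbar : Type*} [Field Kbar] (h q ρ : Kbar[X]) : Prop :=
  h = q ^ 2 + ρ ∧ 2 * q.natDegree ≤ h.natDegree + 1

/-- A part-square decomposition `h = q² + ρ` is *good* if either `v ρ − v h ≥ 2 v 2`,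
or `v ρ − v h < 2 v 2` and no part-square decomposition of `h` has strictly larger
Gauss valuation of its remainder. -/
def IsGoodPSD {Kbar : Type*} [Field Kbar] (v : AddValuation Kbar (WithTop ℚ))
    (h q ρ : Kbar[X]) : Prop :=
  IsPSD h q ρ ∧
    (gaussVal v h + (v 2 + v 2) ≤ gaussVal v ρ ∨
      (gaussVal v ρ < gaussVal v h + (v 2 + v 2) ∧
        ∀ q' ρ' : Kbar[X], IsPSD h q' ρ' → gaussVal v ρ' ≤ gaussVal v ρ))

/-- The residue field of `v` is algebraically closed, encoded via integral lifts:
every monic polynomial of positive degree with integral coefficients has an integral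
root modulo the maximal ideal. -/
def ResidueAlgClosed {Kbar : Type*} [Field Kbar]
    (v : AddValuation Kbar (WithTop ℚ)) : Prop :=
  ∀ p : Kbar[X], p.Monic → 0 < p.natDegree → (∀ i, 0 ≤ v (p.coeff i)) →
    ∃ x : Kbar, 0 ≤ v x ∧ 0 < v (p.eval x)


/-!
Squaring is additive up to terms divisible by `2`, so modulo `2` an odd coefficient of a remainder
cannot be changed by changing `q`, while the even ones form a square that can be absorbed into `q`.
Hence a part-square decomposition with `v ρ - v h < 2 v 2` is good if and only if the minimal
valuation of a coefficient of `ρ` is attained in odd degree.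

The hypotheses on the roots say that `h₁` is dominated by its leading term `a X ^ n` and `h₂` by its
constant term `b`, so that `h₁ * h₂ - (q₁ * q₂) ^ 2 = h₁ * ρ₂ + h₂ * ρ₁ - ρ₁ * ρ₂` is
`a X ^ n * ρ₂ + b * ρ₁` up to terms of larger valuation. A minimal odd coefficient of whichever of
`ρ₁`, `ρ₂` attains the minimum survives in this sum. If `n` is even, then `a X ^ n * ρ₂` keeps the
parities of the degrees of `ρ₂` and lives in degrees at least `n`, above all odd terms of `ρ₁`. If
`n` is odd, then `v ρ₁ = v h₁` while always `v ρ₂ > v h₂`, so that `b * ρ₁` strictly dominates.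
-/

section WithTop

variable {Γ : Type*} [LinearOrderedAddCommMonoidWithTop Γ]

lemma pos_of_lt_add_self_of_le {c t e : Γ} (hct : c ≤ t) (hlt : t < c + (e + e)) : 0 < e := by
  by_contra! he
  refine hlt.not_ge ?_
  calc c + (e + e) ≤ c + (0 + 0) := by gcongr
    _ ≤ t := by simpa only [add_zero] using hct

lemma lt_add_add_of_two_nsmul {a b c e t : Γ} (ha : c ≤ 2 • a) (hb : t ≤ 2 • b)
    (hlt : t < c + (e + e)) : t < e + (a + b) := by
  by_contra! hle
  refine ((add_lt_add_iff_left_of_ne_top hlt.ne_top).2 hlt).not_ge ?_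
  calc c + (e + e) + t ≤ 2 • a + (e + e) + 2 • b := by gcongr
    _ = (e + (a + b)) + (e + (a + b)) := by
      rw [two_nsmul, two_nsmul]
      abel
    _ ≤ t + t := add_le_add hle hle

lemma lt_add_of_le_add_of_lt {a b c x : Γ} (hc : c < ⊤) (hle : c ≤ a + x) (hlt : a < b) :
    c < b + x := by
  rcases eq_or_ne x ⊤ with rfl | hx
  · rwa [add_top]
  · exact hle.trans_lt ((add_lt_add_iff_left_of_ne_top hx).2 hlt)

lemma lt_add_two_nsmul {a e t : Γ} (he : 0 < e) (hle : t ≤ 2 • a) (ht : t < ⊤) :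
    t < e + 2 • a :=
  lt_add_of_le_add_of_lt ht (hle.trans_eq (zero_add _).symm) he

end WithTop

section AddValuation

variable {R Γ ι : Type*} [CommRing R] [LinearOrderedAddCommMonoidWithTop Γ]
  (w : AddValuation R Γ)

lemma map_two_nonneg : 0 ≤ w 2 := by
  rw [← one_add_one_eq_two]
  exact w.map_le_add w.map_one.ge w.map_one.ge

lemma lt_map_mul_sub_mul {x x' y y' : R} (hx : w x < w (x - x')) (hy : w y < w (y - y')) :
    w (x * y) < w (x * y - x' * y') := by
  have hy' : w y' = w y := w.map_eq_of_lt_sub (by rwa [w.map_sub_swap])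
  have hsplit : x * y - x' * y' = x * (y - y') + (x - x') * y' := by ring
  rw [hsplit, w.map_mul]
  refine w.map_lt_add ?_ ?_
  · rw [w.map_mul]
    exact (add_lt_add_iff_right_of_ne_top hx.ne_top).2 hy
  · rw [w.map_mul, hy']
    exact (add_lt_add_iff_left_of_ne_top hy.ne_top).2 hx

lemma lt_map_multisetProd_sub_multisetProd [Nontrivial Γ] (s : Multiset ι) (f g : ι → R)
    (h : ∀ i ∈ s, w (f i) < w (f i - g i)) :
    w (s.map f).prod < w ((s.map f).prod - (s.map g).prod) := by
  induction s using Multiset.induction_on with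
  | empty =>
    simpa [lt_top_iff_ne_top] using fun h =>
      not_subsingleton Γ ⟨fun a b => by rw [← add_zero a, ← add_zero b, h, add_top, add_top]⟩
  | cons i s ih =>
    rw [Multiset.forall_mem_cons] at h
    simpa only [Multiset.map_cons, Multiset.prod_cons] using lt_map_mul_sub_mul w h.1 (ih h.2)

lemma le_map_sum_sq_sub_sum_sq (s : Finset ι) (f : ι → R) {a : Γ}
    (hf : ∀ i ∈ s, a ≤ w (f i)) :
    w 2 + 2 • a ≤ w ((∑ i ∈ s, f i) ^ 2 - ∑ i ∈ s, f i ^ 2) := by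
  classical
  induction s using Finset.induction_on with
  | empty => simp
  | insert j s hj ih =>
    rw [Finset.forall_mem_insert] at hf
    have hcross : w 2 + 2 • a ≤ w (2 * (f j * ∑ i ∈ s, f i)) := by
      rw [w.map_mul, w.map_mul, two_nsmul]
      gcongr
      exacts [hf.1, w.map_le_sum hf.2]
    have hexpand : (∑ i ∈ insert j s, f i) ^ 2 - ∑ i ∈ insert j s, f i ^ 2 =
        ((∑ i ∈ s, f i) ^ 2 - ∑ i ∈ s, f i ^ 2) + 2 * (f j * ∑ i ∈ s, f i) := by
      rw [Finset.sum_insert hj, Finset.sum_insert hj]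
      ring
    rw [hexpand]
    exact w.map_le_add (ih hf.2) hcross

end AddValuation

section GaussVal

variable {F : Type*} [Field F] (v : AddValuation F (WithTop ℚ))

lemma le_gaussVal_iff {f : F[X]} {a : WithTop ℚ} :
    a ≤ gaussVal v f ↔ ∀ i, a ≤ v (f.coeff i) := by
  rw [gaussVal, Finset.le_inf_iff]
  refine ⟨fun h i => ?_, fun h i _ => h i⟩
  by_cases hi : f.coeff i = 0
  · simp [hi]
  · exact h i (mem_support_iff.2 hi)

lemma gaussVal_le_coeff (f : F[X]) (i : ℕ) : gaussVal v f ≤ v (f.coeff i) :=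
  (le_gaussVal_iff v).1 le_rfl i

lemma exists_coeff_eq_gaussVal (f : F[X]) : ∃ i, v (f.coeff i) = gaussVal v f := by
  rcases f.support.eq_empty_or_nonempty with hf | hf
  · exact ⟨0, by simp [gaussVal, support_eq_empty.1 hf]⟩
  · obtain ⟨i, -, hi⟩ := Finset.exists_mem_eq_inf f.support hf fun i => v (f.coeff i)
    exact ⟨i, hi.symm⟩

lemma lt_gaussVal_iff {f : F[X]} {a : WithTop ℚ} :
    a < gaussVal v f ↔ ∀ i, a < v (f.coeff i) := by
  refine ⟨fun h i => h.trans_le (gaussVal_le_coeff v f i), fun h => ?_⟩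
  obtain ⟨i, hi⟩ := exists_coeff_eq_gaussVal v f
  exact hi ▸ h i

lemma gaussVal_monomial (n : ℕ) (a : F) : gaussVal v (monomial n a) = v a := by
  refine le_antisymm ?_ ((le_gaussVal_iff v).2 fun i => ?_)
  · simpa using gaussVal_le_coeff v (monomial n a) n
  · rw [coeff_monomial]
    split_ifs <;> simp

lemma gaussVal_C (a : F) : gaussVal v (C a) = v a :=
  gaussVal_monomial v 0 a

lemma gaussVal_two : gaussVal v 2 = v 2 := by
  rw [← gaussVal_C v 2, map_ofNat C 2]

lemma add_le_gaussVal_mul (f g : F[X]) :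
    gaussVal v f + gaussVal v g ≤ gaussVal v (f * g) := by
  refine (le_gaussVal_iff v).2 fun i => ?_
  rw [coeff_mul]
  refine v.map_le_sum fun p _ => ?_
  rw [v.map_mul]
  exact add_le_add (gaussVal_le_coeff v f _) (gaussVal_le_coeff v g _)

lemma gaussVal_mul (f g : F[X]) : gaussVal v (f * g) = gaussVal v f + gaussVal v g := by
  classical
  refine le_antisymm ?_ (add_le_gaussVal_mul v f g)
  by_cases htop : gaussVal v f + gaussVal v g = ⊤
  · exact htop ▸ le_top
  obtain ⟨hf, hg⟩ := WithTop.add_ne_top.1 htop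
  -- At the sum of the least indices attaining the two minima a single product dominates.
  have hfmin := fun i => Nat.find_min (exists_coeff_eq_gaussVal v f) (m := i)
  have hgmin := fun i => Nat.find_min (exists_coeff_eq_gaussVal v g) (m := i)
  have hfm := Nat.find_spec (exists_coeff_eq_gaussVal v f)
  have hgn := Nat.find_spec (exists_coeff_eq_gaussVal v g)
  set m := Nat.find (exists_coeff_eq_gaussVal v f)
  set n := Nat.find (exists_coeff_eq_gaussVal v g)
  have hmain : v (f.coeff m * g.coeff n) = gaussVal v f + gaussVal v g := by
    rw [v.map_mul, hfm, hgn]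
  have hrest : gaussVal v f + gaussVal v g <
      v (∑ p ∈ (Finset.HasAntidiagonal.antidiagonal (m + n)).erase (m, n),
        f.coeff p.1 * g.coeff p.2) := by
    refine v.map_lt_sum htop fun ⟨i, j⟩ hij => ?_
    obtain ⟨hne, hsum⟩ := Finset.mem_erase.1 hij
    rw [Finset.HasAntidiagonal.mem_antidiagonal] at hsum
    rw [v.map_mul]
    have hlt : i < m ∨ j < n := by
      by_contra! hge
      exact hne (Prod.ext (by lia) (by lia))
    rcases hlt with hi | hj
    · exact WithTop.add_lt_add_of_lt_of_le hg
        ((gaussVal_le_coeff v f i).lt_of_ne' (hfmin i hi)) (gaussVal_le_coeff v g j)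
    · exact WithTop.add_lt_add_of_le_of_lt hf (gaussVal_le_coeff v f i)
        ((gaussVal_le_coeff v g j).lt_of_ne' (hgmin j hj))
  have hmem : (m, n) ∈ Finset.HasAntidiagonal.antidiagonal (m + n) :=
    Finset.HasAntidiagonal.mem_antidiagonal.2 rfl
  calc gaussVal v (f * g) ≤ v ((f * g).coeff (m + n)) := gaussVal_le_coeff v _ _
    _ = gaussVal v f + gaussVal v g := by
      rw [coeff_mul, ← Finset.add_sum_erase _ _ hmem,
        v.map_add_eq_of_lt_left (hmain ▸ hrest), hmain]

/-- The Gauss valuation as an additive valuation on the polynomial ring. -/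
noncomputable def gaussValuation : AddValuation F[X] (WithTop ℚ) :=
  AddValuation.of (gaussVal v) (by simp [gaussVal]) (by simpa using gaussVal_C v 1)
    (fun f g => (le_gaussVal_iff v).2 fun i => by
      rw [coeff_add]
      exact v.map_le_add ((min_le_left _ _).trans (gaussVal_le_coeff v f i))
        ((min_le_right _ _).trans (gaussVal_le_coeff v g i)))
    (gaussVal_mul v)

@[simp]
lemma gaussValuation_apply (f : F[X]) : gaussValuation v f = gaussVal v f :=
  rfl

lemma le_gaussVal_sq_sub (q : F[X]) :
    v 2 + 2 • gaussVal v q ≤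
      gaussVal v (q ^ 2 - ∑ i ∈ q.support, monomial (2 * i) (q.coeff i ^ 2)) := by
  have hsum := le_map_sum_sq_sub_sum_sq (gaussValuation v) q.support
    (fun i => monomial i (q.coeff i)) (a := gaussVal v q) fun i _ => by
      rw [gaussValuation_apply, gaussVal_monomial]
      exact gaussVal_le_coeff v q i
  simpa only [← q.as_sum_support, monomial_pow, mul_comm _ 2, gaussValuation_apply,
    gaussVal_two] using hsum

lemma le_coeff_sq_of_odd (q : F[X]) {n : ℕ} (hn : Odd n) :
    v 2 + 2 • gaussVal v q ≤ v ((q ^ 2).coeff n) := by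
  have hzero : (∑ i ∈ q.support, monomial (2 * i) (q.coeff i ^ 2)).coeff n = 0 := by
    rw [finsetSum_coeff]
    refine Finset.sum_eq_zero fun i _ => coeff_monomial_of_ne _ ?_
    rintro rfl
    exact Nat.not_odd_iff_even.2 (even_two_mul i) hn
  have hle := (le_gaussVal_sq_sub v q).trans (gaussVal_le_coeff v _ n)
  rwa [coeff_sub, hzero, sub_zero] at hle

lemma le_coeff_sq_sub (q : F[X]) (n : ℕ) :
    v 2 + 2 • gaussVal v q ≤ v ((q ^ 2).coeff (2 * n) - q.coeff n ^ 2) := by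
  have hcoeff : (∑ i ∈ q.support, monomial (2 * i) (q.coeff i ^ 2)).coeff (2 * n) =
      q.coeff n ^ 2 := by
    simp +contextual [finsetSum_coeff, coeff_monomial]
  have hle := (le_gaussVal_sq_sub v q).trans (gaussVal_le_coeff v _ (2 * n))
  rwa [coeff_sub, hcoeff] at hle

lemma map_coeff_eq_of_gaussVal_lt_sub {f g : F[X]} (hfg : gaussVal v f < gaussVal v (g - f))
    {i : ℕ} (hi : v (f.coeff i) = gaussVal v f) : v (g.coeff i) = gaussVal v f := by
  rw [← hi]
  refine v.map_eq_of_lt_sub ?_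
  rw [hi, ← coeff_sub]
  exact hfg.trans_le (gaussVal_le_coeff v _ i)

lemma gaussVal_sub_monomial_le_gaussVal_erase (f : F[X]) (n : ℕ) (a : F) :
    gaussVal v (f - monomial n a) ≤ gaussVal v (f.erase n) := by
  refine (le_gaussVal_iff v).2 fun i => ?_
  rcases eq_or_ne i n with rfl | hi
  · simp
  · simpa [erase_ne f hi, coeff_monomial, hi.symm] using gaussVal_le_coeff v (f - monomial n a) i

lemma map_coeff_of_gaussVal_lt_erase {f : F[X]} {n : ℕ}
    (hf : gaussVal v f < gaussVal v (f.erase n)) : v (f.coeff n) = gaussVal v f := by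
  have hsub : monomial n (f.coeff n) - f = -f.erase n := by
    nth_rw 2 [← monomial_add_erase f n]
    ring
  rw [← gaussVal_monomial v n]
  refine (gaussValuation v).map_eq_of_lt_sub ?_
  rwa [hsub, (gaussValuation v).map_neg]

lemma gaussVal_monomial_leadingCoeff {f : F[X]}
    (hf : gaussVal v f < gaussVal v f.eraseLead) :
    gaussVal v (monomial f.natDegree f.leadingCoeff) = gaussVal v f := by
  rw [gaussVal_monomial]
  exact map_coeff_of_gaussVal_lt_erase v hf

lemma gaussVal_C_coeff_zero {f : F[X]} (hf : gaussVal v f < gaussVal v (f.erase 0)) :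
    gaussVal v (C (f.coeff 0)) = gaussVal v f := by
  rw [gaussVal_C]
  exact map_coeff_of_gaussVal_lt_erase v hf

lemma gaussVal_lt_sub_C_mul_prod {f : F[X]} (hf : f.Splits) (hf0 : f ≠ 0) (g : F → F[X])
    (hg : ∀ x, f.IsRoot x → gaussVal v (X - C x) < gaussVal v (X - C x - g x)) :
    gaussVal v f < gaussVal v (f - C f.leadingCoeff * (f.roots.map g).prod) := by
  have hC : gaussValuation v (C f.leadingCoeff) <
      gaussValuation v (C f.leadingCoeff - C f.leadingCoeff) := by
    rw [sub_self, (gaussValuation v).map_zero, gaussValuation_apply, gaussVal_C,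
      lt_top_iff_ne_top, v.ne_top_iff]
    exact leadingCoeff_ne_zero.2 hf0
  have hmul := lt_map_mul_sub_mul (gaussValuation v) hC <|
    lt_map_multisetProd_sub_multisetProd (gaussValuation v) f.roots (fun x => X - C x) g
      fun x hx => hg x (isRoot_of_mem_roots hx)
  rwa [← hf.eq_prod_roots] at hmul

lemma gaussVal_lt_eraseLead {f : F[X]} (hf : f.Splits) (hf0 : f ≠ 0)
    (hr : ∀ x, f.IsRoot x → 0 < v x) : gaussVal v f < gaussVal v f.eraseLead := by
  have hlt := gaussVal_lt_sub_C_mul_prod v hf hf0 (fun _ => X) fun x hx => by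
    calc gaussVal v (X - C x) ≤ v ((X - C x).coeff 1) := gaussVal_le_coeff v _ 1
      _ = 0 := by simp
      _ < v x := hr x hx
      _ = gaussVal v (X - C x - X) := by
        rw [sub_sub_cancel_left, ← C_neg, gaussVal_C, v.map_neg]
  rwa [Multiset.map_const', Multiset.prod_replicate, ← hf.natDegree_eq_card_roots,
    self_sub_C_mul_X_pow] at hlt

lemma gaussVal_lt_erase_zero {f : F[X]} (hf : f.Splits) (hf0 : f ≠ 0)
    (hr : ∀ x, f.IsRoot x → v x < 0) : gaussVal v f < gaussVal v (f.erase 0) := by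
  have hlt := gaussVal_lt_sub_C_mul_prod v hf hf0 (fun x => C (-x)) fun x hx => by
    calc gaussVal v (X - C x) ≤ v ((X - C x).coeff 0) := gaussVal_le_coeff v _ 0
      _ = v x := by simp
      _ < 0 := hr x hx
      _ = gaussVal v (monomial 1 1) := by rw [gaussVal_monomial, v.map_one]
      _ = gaussVal v (X - C x - C (-x)) := by
        rw [monomial_one_one_eq_X, C_neg, sub_neg_eq_add, sub_add_cancel]
  have hconst : (f.roots.map fun x => C (-x)).prod = C (f.roots.map fun x => -x).prod := by
    rw [map_multiset_prod, Multiset.map_map]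
    rfl
  rw [hconst, ← C_mul] at hlt
  exact hlt.trans_le (gaussVal_sub_monomial_le_gaussVal_erase v f 0 _)

end GaussVal

section PartSquare

variable {F : Type*} [Field F] {v : AddValuation F (WithTop ℚ)} {h q ρ q' ρ' : F[X]}

lemma isPSD_zero (h : F[X]) : IsPSD h 0 h :=
  ⟨by ring, by simp⟩

lemma isPSD_sub_sq (hdeg : 2 * q.natDegree ≤ h.natDegree + 1) : IsPSD h q (h - q ^ 2) :=
  ⟨by ring, hdeg⟩

lemma IsPSD.sq_eq (hp : IsPSD h q ρ) : q ^ 2 = h - ρ := by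
  rw [hp.1]
  ring

lemma IsPSD.natDegree_remainder_le (hp : IsPSD h q ρ) :
    ρ.natDegree ≤ max h.natDegree (2 * q.natDegree) := by
  rw [← natDegree_pow, ← sub_eq_iff_eq_add'.2 hp.1]
  exact natDegree_sub_le _ _

lemma IsPSD.gaussVal_le_two_nsmul (hp : IsPSD h q ρ) (hle : gaussVal v h ≤ gaussVal v ρ) :
    gaussVal v h ≤ 2 • gaussVal v q :=
  calc gaussVal v h ≤ gaussVal v (h - ρ) := (gaussValuation v).map_le_sub le_rfl hle
    _ = gaussVal v (q ^ 2) := by rw [hp.sq_eq]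
    _ = 2 • gaussVal v q := (gaussValuation v).map_pow q 2

lemma IsGoodPSD.min_le (hg : IsGoodPSD v h q ρ) (hp : IsPSD h q' ρ') :
    min (gaussVal v ρ') (gaussVal v h + (v 2 + v 2)) ≤ gaussVal v ρ := by
  rcases hg.2 with hle | ⟨-, hmax⟩
  · exact (min_le_right _ _).trans hle
  · exact (min_le_left _ _).trans (hmax q' ρ' hp)

lemma IsGoodPSD.gaussVal_le (hg : IsGoodPSD v h q ρ) : gaussVal v h ≤ gaussVal v ρ := by
  have hv2 := map_two_nonneg v
  exact (le_min le_rfl (le_add_of_nonneg_right (add_nonneg hv2 hv2))).trans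
    (hg.min_le (isPSD_zero h))

lemma exists_coeff_sq_eq (hsq : ∀ x : F, IsSquare x) (f : F[X]) :
    ∃ s : F[X], ∀ i, s.coeff i ^ 2 = f.coeff (2 * i) := by
  choose r hr using fun x => hsq x
  refine ⟨∑ i ∈ Finset.range (f.natDegree + 1), monomial i (r (f.coeff (2 * i))), fun i => ?_⟩
  rw [finsetSum_coeff]
  simp only [coeff_monomial, Finset.sum_ite_eq', Finset.mem_range]
  split_ifs with hi
  · rw [sq, ← hr]
  · rw [coeff_eq_zero_of_natDegree_lt (by lia : f.natDegree < 2 * i), zero_pow two_ne_zero]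

lemma two_mul_natDegree_le_of_coeff_sq {s f : F[X]}
    (hs : ∀ i, s.coeff i ^ 2 = f.coeff (2 * i)) : 2 * s.natDegree ≤ f.natDegree := by
  rcases eq_or_ne s 0 with rfl | hs0
  · simp
  · refine le_natDegree_of_ne_zero ?_
    rw [← hs]
    exact pow_ne_zero 2 (leadingCoeff_ne_zero.2 hs0)

lemma gaussVal_le_two_nsmul_of_coeff_sq {s f : F[X]}
    (hs : ∀ i, s.coeff i ^ 2 = f.coeff (2 * i)) : gaussVal v f ≤ 2 • gaussVal v s := by
  obtain ⟨i, hi⟩ := exists_coeff_eq_gaussVal v s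
  rw [← hi, ← v.map_pow, hs]
  exact gaussVal_le_coeff v f _

lemma gaussVal_lt_sub_sq (hv2 : 0 < v 2) {s f : F[X]}
    (hs : ∀ i, s.coeff i ^ 2 = f.coeff (2 * i))
    (hodd : ∀ i, Odd i → gaussVal v f < v (f.coeff i)) :
    gaussVal v f < gaussVal v (f - s ^ 2) := by
  have hlt : gaussVal v f < v 2 + 2 • gaussVal v s :=
    lt_add_two_nsmul hv2 (gaussVal_le_two_nsmul_of_coeff_sq hs) (hodd 1 odd_one).lt_top
  refine (lt_gaussVal_iff v).2 fun i => ?_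
  rw [coeff_sub, v.map_sub_swap]
  rcases Nat.even_or_odd' i with ⟨j, rfl | rfl⟩
  · rw [← hs]
    exact hlt.trans_le (le_coeff_sq_sub v s j)
  · have hj := odd_two_mul_add_one j
    rw [sub_eq_add_neg]
    refine v.map_lt_add (hlt.trans_le (le_coeff_sq_of_odd v s hj)) ?_
    rw [v.map_neg]
    exact hodd _ hj

-- If no odd coefficient of `ρ` were minimal, adding to `q` the square root `s` of the even part
-- of `ρ` would give a better remainder.
lemma IsGoodPSD.exists_odd_coeff (hsq : ∀ x : F, IsSquare x) (hg : IsGoodPSD v h q ρ)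
    (hlt : gaussVal v ρ < gaussVal v h + (v 2 + v 2)) :
    ∃ i, Odd i ∧ v (ρ.coeff i) = gaussVal v ρ := by
  by_contra! hne
  have hodd : ∀ i, Odd i → gaussVal v ρ < v (ρ.coeff i) := fun i hi =>
    (gaussVal_le_coeff v ρ i).lt_of_ne' (hne i hi)
  have hv2 := pos_of_lt_add_self_of_le hg.gaussVal_le hlt
  obtain ⟨s, hs⟩ := exists_coeff_sq_eq hsq ρ
  have hcross : gaussVal v ρ < gaussVal v (2 * (q * s)) := by
    rw [gaussVal_mul, gaussVal_mul, gaussVal_two]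
    exact lt_add_add_of_two_nsmul (hg.1.gaussVal_le_two_nsmul hg.gaussVal_le)
      (gaussVal_le_two_nsmul_of_coeff_sq hs) hlt
  have himproved : gaussVal v ρ < gaussVal v (h - (q + s) ^ 2) := by
    have hsplit : h - (q + s) ^ 2 = (ρ - s ^ 2) + -(2 * (q * s)) := by
      rw [hg.1.1]
      ring
    rw [hsplit]
    refine (gaussValuation v).map_lt_add (gaussVal_lt_sub_sq hv2 hs hodd) ?_
    rwa [(gaussValuation v).map_neg]
  have hpsd : IsPSD h (q + s) (h - (q + s) ^ 2) := by
    refine isPSD_sub_sq ?_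
    have hq := hg.1.2
    have hρ := hg.1.natDegree_remainder_le
    have hs := two_mul_natDegree_le_of_coeff_sq hs
    have hadd := natDegree_add_le q s
    lia
  exact (lt_min himproved hlt).not_ge (hg.min_le hpsd)

lemma IsPSD.gaussVal_remainder_le_of_odd_coeff (hp : IsPSD h q ρ)
    (hle : gaussVal v h ≤ gaussVal v ρ) (hlt : gaussVal v ρ < gaussVal v h + (v 2 + v 2))
    {i : ℕ} (hi : Odd i) (hval : v (ρ.coeff i) = gaussVal v ρ) (hp' : IsPSD h q' ρ') :
    gaussVal v ρ' ≤ gaussVal v ρ := by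
  by_contra! himproved
  have hv2 := pos_of_lt_add_self_of_le hle hlt
  have hq := hp.gaussVal_le_two_nsmul hle
  set d := q' - q with hd
  have hcross : gaussVal v (2 * (q * d)) = v 2 + (gaussVal v q + gaussVal v d) := by
    rw [gaussVal_mul, gaussVal_mul, gaussVal_two]
  have hdsq : gaussVal v (d ^ 2) = 2 • gaussVal v d := (gaussValuation v).map_pow d 2
  have hdiff : ρ - ρ' = d ^ 2 + 2 * (q * d) := by
    rw [← sub_eq_iff_eq_add'.2 hp.1, ← sub_eq_iff_eq_add'.2 hp'.1, hd]
    ring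
  have hdle : gaussVal v ρ ≤ 2 • gaussVal v d := by
    by_contra! hdlt
    have hsq : gaussVal v (d ^ 2) < gaussVal v (2 * (q * d)) := by
      rw [hdsq, hcross]
      exact lt_add_add_of_two_nsmul hq le_rfl (hdlt.trans hlt)
    have hsum : gaussVal v (ρ - ρ') = 2 • gaussVal v d := by
      rw [hdiff, ← hdsq]
      exact (gaussValuation v).map_add_eq_of_lt_left hsq
    exact (hsum ▸ hdlt).not_ge ((gaussValuation v).map_le_sub le_rfl himproved.le)
  have hdodd : gaussVal v ρ < v ((d ^ 2).coeff i) :=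
    (lt_add_two_nsmul hv2 hdle himproved.lt_top).trans_le (le_coeff_sq_of_odd v d hi)
  have hcrossodd : gaussVal v ρ < v ((2 * (q * d)).coeff i) :=
    (hcross ▸ lt_add_add_of_two_nsmul hq hdle hlt).trans_le (gaussVal_le_coeff v _ i)
  have hρ : ρ.coeff i = (d ^ 2).coeff i + (2 * (q * d)).coeff i + ρ'.coeff i := by
    rw [← coeff_add, ← hdiff, ← coeff_add, sub_add_cancel]
  refine hval.not_gt ?_
  rw [hρ]
  exact v.map_lt_add (v.map_lt_add hdodd hcrossodd) (himproved.trans_le (gaussVal_le_coeff v _ i))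

theorem IsPSD.isGoodPSD_iff_exists_odd_coeff (hsq : ∀ x : F, IsSquare x) (hp : IsPSD h q ρ)
    (hle : gaussVal v h ≤ gaussVal v ρ) (hlt : gaussVal v ρ < gaussVal v h + (v 2 + v 2)) :
    IsGoodPSD v h q ρ ↔ ∃ i, Odd i ∧ v (ρ.coeff i) = gaussVal v ρ :=
  ⟨fun hg => hg.exists_odd_coeff hsq hlt, fun ⟨_, hi, hval⟩ =>
    ⟨hp, .inr ⟨hlt, fun _ _ => hp.gaussVal_remainder_le_of_odd_coeff hle hlt hi hval⟩⟩⟩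

end PartSquare

section Product

variable {F : Type*} [Field F] {v : AddValuation F (WithTop ℚ)} {h q ρ h₁ q₁ ρ₁ h₂ q₂ ρ₂ : F[X]}

lemma IsPSD.mul (hne₁ : h₁ ≠ 0) (hne₂ : h₂ ≠ 0)
    (hodd : ¬(Odd h₁.natDegree ∧ Odd h₂.natDegree)) (hp₁ : IsPSD h₁ q₁ ρ₁)
    (hp₂ : IsPSD h₂ q₂ ρ₂) : IsPSD (h₁ * h₂) (q₁ * q₂) (h₁ * h₂ - (q₁ * q₂) ^ 2) := by
  refine isPSD_sub_sq ?_
  rw [natDegree_mul hne₁ hne₂]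
  have hq := natDegree_mul_le (p := q₁) (q := q₂)
  have hq₁ := hp₁.2
  have hq₂ := hp₂.2
  rcases not_and_or.1 hodd with hn | hn
  all_goals
    obtain ⟨m, hm⟩ := Nat.not_odd_iff_even.1 hn
    lia

lemma IsGoodPSD.gaussVal_lt_of_lt_erase_zero (hsq : ∀ x : F, IsSquare x) (hv2 : 0 < v 2)
    (hd : gaussVal v h < gaussVal v (h.erase 0)) (hg : IsGoodPSD v h q ρ) :
    gaussVal v h < gaussVal v ρ := by
  obtain ⟨z, hz⟩ := hsq (h.coeff 0)
  have hpsd : IsPSD h (C z) (h.erase 0) := by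
    refine ⟨?_, by simp⟩
    nth_rw 1 [← monomial_add_erase h 0, hz, monomial_zero_left, C_mul, sq]
  refine (lt_min hd ?_).trans_le (hg.min_le hpsd)
  rw [add_comm]
  exact lt_add_of_le_add_of_lt hd.lt_top (zero_add _).ge
    (add_pos_of_pos_of_nonneg hv2 hv2.le)

lemma IsPSD.even_natDegree_of_lt_eraseLead (hv2 : 0 < v 2)
    (hd : gaussVal v h < gaussVal v h.eraseLead) (hp : IsPSD h q ρ)
    (hlt : gaussVal v h < gaussVal v ρ) : Even h.natDegree := by
  by_contra! hodd
  have hsq : gaussVal v h < v ((q ^ 2).coeff h.natDegree) :=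
    (lt_add_two_nsmul hv2 (hp.gaussVal_le_two_nsmul hlt.le) hd.lt_top).trans_le
      (le_coeff_sq_of_odd v q (Nat.not_even_iff_odd.1 hodd))
  refine (map_coeff_of_gaussVal_lt_erase v hd).not_gt ?_
  rw [hp.1, coeff_add, ← hp.1]
  exact v.map_lt_add hsq (hlt.trans_le (gaussVal_le_coeff v ρ _))

lemma lt_gaussVal_remainder_sub (hd₁ : gaussVal v h₁ < gaussVal v h₁.eraseLead)
    (hd₂ : gaussVal v h₂ < gaussVal v (h₂.erase 0)) (hp₁ : IsPSD h₁ q₁ ρ₁)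
    (hp₂ : IsPSD h₂ q₂ ρ₂) (hlt₂ : gaussVal v h₂ < gaussVal v ρ₂) {μ : WithTop ℚ} (hμ : μ < ⊤)
    (hμ₁ : μ ≤ gaussVal v ρ₁ + gaussVal v h₂) (hμ₂ : μ ≤ gaussVal v ρ₂ + gaussVal v h₁) :
    μ < gaussVal v (h₁ * h₂ - (q₁ * q₂) ^ 2 -
      (monomial h₁.natDegree h₁.leadingCoeff * ρ₂ + C (h₂.coeff 0) * ρ₁)) := by
  have herase₁ : h₁.eraseLead = h₁ - monomial h₁.natDegree h₁.leadingCoeff :=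
    (sub_eq_of_eq_add (eraseLead_add_monomial_natDegree_leadingCoeff h₁).symm).symm
  have herase₂ : h₂.erase 0 = h₂ - C (h₂.coeff 0) :=
    (sub_eq_of_eq_add' (monomial_add_erase h₂ 0).symm).symm
  have hsplit : h₁ * h₂ - (q₁ * q₂) ^ 2 -
      (monomial h₁.natDegree h₁.leadingCoeff * ρ₂ + C (h₂.coeff 0) * ρ₁) =
      h₁.eraseLead * ρ₂ + h₂.erase 0 * ρ₁ - ρ₂ * ρ₁ := by
    rw [mul_pow, hp₁.sq_eq, hp₂.sq_eq, herase₁, herase₂]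
    ring
  rw [add_comm] at hμ₁ hμ₂
  rw [hsplit, sub_eq_add_neg]
  refine (gaussValuation v).map_lt_add ((gaussValuation v).map_lt_add ?_ ?_) ?_
  · rw [gaussValuation_apply, gaussVal_mul]
    exact lt_add_of_le_add_of_lt hμ hμ₂ hd₁
  · rw [gaussValuation_apply, gaussVal_mul]
    exact lt_add_of_le_add_of_lt hμ hμ₁ hd₂
  · rw [(gaussValuation v).map_neg, gaussValuation_apply, gaussVal_mul]
    exact lt_add_of_le_add_of_lt hμ hμ₁ hlt₂

lemma min_le_gaussVal_add (hd₁ : gaussVal v h₁ < gaussVal v h₁.eraseLead)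
    (hd₂ : gaussVal v h₂ < gaussVal v (h₂.erase 0)) (ρ₁ ρ₂ : F[X]) :
    min (gaussVal v ρ₁ + gaussVal v h₂) (gaussVal v ρ₂ + gaussVal v h₁) ≤
      gaussVal v (monomial h₁.natDegree h₁.leadingCoeff * ρ₂ + C (h₂.coeff 0) * ρ₁) := by
  refine (gaussValuation v).map_le_add ?_ ?_
  · rw [gaussValuation_apply, gaussVal_mul, gaussVal_monomial_leadingCoeff v hd₁,
      add_comm (gaussVal v h₁)]
    exact min_le_right _ _
  · rw [gaussValuation_apply, gaussVal_mul, gaussVal_C_coeff_zero v hd₂,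
      add_comm (gaussVal v h₂)]
    exact min_le_left _ _

lemma IsPSD.lt_coeff_monomial_mul (hv2 : 0 < v 2)
    (hd : gaussVal v h < gaussVal v h.eraseLead) (hp : IsPSD h q ρ) {i : ℕ} (hi : Odd i)
    (hcoeff : v (ρ.coeff i) = gaussVal v ρ) (hρ : gaussVal v ρ < ⊤) {a : WithTop ℚ} (ha : a < ⊤)
    {f : F[X]} (hf : a < gaussVal v f) :
    gaussVal v ρ + a < v ((monomial h.natDegree h.leadingCoeff * f).coeff i) := by
  by_cases heven : Even h.natDegree
  · have hin : i < h.natDegree := by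
      have hne : ρ.coeff i ≠ 0 := by
        intro h0
        rw [h0, v.map_zero] at hcoeff
        exact hρ.ne hcoeff.symm
      have hle := (le_natDegree_of_ne_zero hne).trans hp.natDegree_remainder_le
      have hq := hp.2
      obtain ⟨m, hm⟩ := heven
      obtain ⟨j, hj⟩ := hi
      lia
    rw [← C_mul_X_pow_eq_monomial, mul_assoc, coeff_C_mul, coeff_X_pow_mul', if_neg hin.not_ge,
      mul_zero, v.map_zero]
    exact WithTop.add_lt_top.2 ⟨hρ, ha⟩
  · have hle : gaussVal v ρ ≤ gaussVal v h :=
      not_lt.1 fun hlt => heven (hp.even_natDegree_of_lt_eraseLead hv2 hd hlt)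
    calc gaussVal v ρ + a < gaussVal v h + gaussVal v f :=
          WithTop.add_lt_add_of_le_of_lt hρ.ne hle hf
      _ = gaussVal v (monomial h.natDegree h.leadingCoeff * f) := by
          rw [gaussVal_mul, gaussVal_monomial_leadingCoeff v hd]
      _ ≤ v ((monomial h.natDegree h.leadingCoeff * f).coeff i) := gaussVal_le_coeff v _ i

-- The remainder that realises the minimum contributes its odd coefficient: `ρ₁` in place, and `ρ₂`
-- shifted by `h₁.natDegree`, which is then even.
lemma exists_odd_coeff_add (hsq : ∀ x : F, IsSquare x) (hv2 : 0 < v 2)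
    (hd₁ : gaussVal v h₁ < gaussVal v h₁.eraseLead)
    (hd₂ : gaussVal v h₂ < gaussVal v (h₂.erase 0))
    (hg₁ : IsGoodPSD v h₁ q₁ ρ₁) (hg₂ : IsGoodPSD v h₂ q₂ ρ₂)
    (hlt₂ : gaussVal v h₂ < gaussVal v ρ₂)
    (hμ : min (gaussVal v ρ₁ + gaussVal v h₂) (gaussVal v ρ₂ + gaussVal v h₁) <
      gaussVal v h₁ + gaussVal v h₂ + (v 2 + v 2)) :
    ∃ i, Odd i ∧
      v ((monomial h₁.natDegree h₁.leadingCoeff * ρ₂ + C (h₂.coeff 0) * ρ₁).coeff i) =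
        min (gaussVal v ρ₁ + gaussVal v h₂) (gaussVal v ρ₂ + gaussVal v h₁) := by
  rcases le_or_gt (gaussVal v ρ₁ + gaussVal v h₂) (gaussVal v ρ₂ + gaussVal v h₁) with hle | hgt
  · rw [min_eq_left hle] at hμ ⊢
    rw [add_right_comm] at hμ
    have hlt₁ := lt_of_add_lt_add_right hμ
    obtain ⟨i, hi, hval⟩ := hg₁.exists_odd_coeff hsq hlt₁
    have hright : v ((C (h₂.coeff 0) * ρ₁).coeff i) = gaussVal v ρ₁ + gaussVal v h₂ := by
      rw [coeff_C_mul, v.map_mul, hval, map_coeff_of_gaussVal_lt_erase v hd₂, add_comm]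
    refine ⟨i, hi, ?_⟩
    rw [coeff_add, ← hright]
    refine v.map_add_eq_of_lt_right ?_
    rw [hright]
    exact hg₁.1.lt_coeff_monomial_mul hv2 hd₁ hi hval hlt₁.lt_top hd₂.lt_top hlt₂
  · rw [min_eq_right hgt.le] at hμ ⊢
    rw [add_assoc, add_comm] at hμ
    have hlt := lt_of_add_lt_add_left hμ
    obtain ⟨i, hi, hval⟩ := hg₂.exists_odd_coeff hsq hlt
    have hlt₁ : gaussVal v h₁ < gaussVal v ρ₁ := by
      by_contra! hle
      refine hgt.not_ge ?_
      rw [add_comm]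
      gcongr
    have heven := hg₁.1.even_natDegree_of_lt_eraseLead hv2 hd₁ hlt₁
    have hleft : v ((monomial h₁.natDegree h₁.leadingCoeff * ρ₂).coeff (i + h₁.natDegree)) =
        gaussVal v ρ₂ + gaussVal v h₁ := by
      rw [coeff_monomial_mul, v.map_mul, hval, add_comm]
      exact congrArg _ (map_coeff_of_gaussVal_lt_erase v hd₁)
    refine ⟨i + h₁.natDegree, hi.add_even heven, ?_⟩
    rw [coeff_add, ← hleft]
    refine v.map_add_eq_of_lt_left ?_
    calc v ((monomial h₁.natDegree h₁.leadingCoeff * ρ₂).coeff (i + h₁.natDegree))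
        < gaussVal v ρ₁ + gaussVal v h₂ := hleft.trans_lt hgt
      _ = gaussVal v (C (h₂.coeff 0) * ρ₁) := by
        rw [gaussVal_mul, gaussVal_C_coeff_zero v hd₂, add_comm]
      _ ≤ v ((C (h₂.coeff 0) * ρ₁).coeff (i + h₁.natDegree)) := gaussVal_le_coeff v _ _

lemma gaussVal_remainder_and_exists_odd_coeff (hsq : ∀ x : F, IsSquare x) (hv2 : 0 < v 2)
    (hd₁ : gaussVal v h₁ < gaussVal v h₁.eraseLead)
    (hd₂ : gaussVal v h₂ < gaussVal v (h₂.erase 0))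
    (hg₁ : IsGoodPSD v h₁ q₁ ρ₁) (hg₂ : IsGoodPSD v h₂ q₂ ρ₂)
    (hμ : min (gaussVal v ρ₁ + gaussVal v h₂) (gaussVal v ρ₂ + gaussVal v h₁) <
      gaussVal v h₁ + gaussVal v h₂ + (v 2 + v 2)) :
    gaussVal v (h₁ * h₂ - (q₁ * q₂) ^ 2) =
        min (gaussVal v ρ₁ + gaussVal v h₂) (gaussVal v ρ₂ + gaussVal v h₁) ∧
      ∃ i, Odd i ∧ v ((h₁ * h₂ - (q₁ * q₂) ^ 2).coeff i) =
        gaussVal v (h₁ * h₂ - (q₁ * q₂) ^ 2) := by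
  have hlt₂ := hg₂.gaussVal_lt_of_lt_erase_zero hsq hv2 hd₂
  obtain ⟨i, hi, hval⟩ := exists_odd_coeff_add hsq hv2 hd₁ hd₂ hg₁ hg₂ hlt₂ hμ
  have hmain := (hval ▸ gaussVal_le_coeff v _ i).antisymm (min_le_gaussVal_add hd₁ hd₂ ρ₁ ρ₂)
  have hrest := lt_gaussVal_remainder_sub hd₁ hd₂ hg₁.1 hg₂.1 hlt₂ hμ.lt_top
    (min_le_left _ _) (min_le_right _ _)
  rw [← hmain] at hrest hval ⊢
  have hrem := (gaussValuation v).map_eq_of_lt_sub hrest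
  exact ⟨hrem, i, hi, (map_coeff_eq_of_gaussVal_lt_sub v hrest hval).trans hrem.symm⟩

end Product

theorem stmt5_general {F : Type*} [Field F] (v : AddValuation F (WithTop ℚ))
    (hsq : ∀ x : F, IsSquare x) (h₁ h₂ : F[X])
    (hd₁ : gaussVal v h₁ < gaussVal v h₁.eraseLead)
    (hd₂ : gaussVal v h₂ < gaussVal v (h₂.erase 0))
    (hoddone : ¬(Odd h₁.natDegree ∧ Odd h₂.natDegree)) (q₁ ρ₁ q₂ ρ₂ : F[X])
    (hg₁ : IsGoodPSD v h₁ q₁ ρ₁) (hg₂ : IsGoodPSD v h₂ q₂ ρ₂)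
    (hmin : gaussVal v ρ₁ < gaussVal v h₁ + (v 2 + v 2) ∨
            gaussVal v ρ₂ < gaussVal v h₂ + (v 2 + v 2)) :
    ∀ h q ρ : F[X], h = h₁ * h₂ → q = q₁ * q₂ → ρ = h - q ^ 2 →
      IsPSD h q ρ ∧
      gaussVal v ρ + (gaussVal v h₁ + gaussVal v h₂) =
        min (gaussVal v ρ₁ + gaussVal v h₂) (gaussVal v ρ₂ + gaussVal v h₁) +
          gaussVal v h ∧
      IsGoodPSD v h q ρ := by
  rintro _ _ _ rfl rfl rfl
  have hv2 : 0 < v 2 :=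
    hmin.elim (pos_of_lt_add_self_of_le hg₁.gaussVal_le)
      (pos_of_lt_add_self_of_le hg₂.gaussVal_le)
  have hne₁ : h₁ ≠ 0 := by
    rintro rfl
    simp at hd₁
  have hne₂ : h₂ ≠ 0 := by
    rintro rfl
    simp at hd₂
  have hp := hg₁.1.mul hne₁ hne₂ hoddone hg₂.1
  have hlt : min (gaussVal v ρ₁ + gaussVal v h₂) (gaussVal v ρ₂ + gaussVal v h₁) <
      gaussVal v (h₁ * h₂) + (v 2 + v 2) := by
    rw [gaussVal_mul, min_lt_iff]
    refine hmin.imp (fun h => ?_) fun h => ?_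
    · rw [add_right_comm]
      exact WithTop.add_lt_add_right hd₂.ne_top h
    · rw [add_comm (gaussVal v h₁), add_right_comm]
      exact WithTop.add_lt_add_right hd₁.ne_top h
  have hle : gaussVal v (h₁ * h₂) ≤
      min (gaussVal v ρ₁ + gaussVal v h₂) (gaussVal v ρ₂ + gaussVal v h₁) := by
    rw [gaussVal_mul, add_comm (gaussVal v ρ₂)]
    exact le_min (by gcongr; exact hg₁.gaussVal_le) (by gcongr; exact hg₂.gaussVal_le)
  obtain ⟨hρ, hodd⟩ := gaussVal_remainder_and_exists_odd_coeff hsq hv2 hd₁ hd₂ hg₁ hg₂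
    (gaussVal_mul v h₁ h₂ ▸ hlt)
  rw [← hρ] at hlt hle ⊢
  exact ⟨hp, by rw [gaussVal_mul], (hp.isGoodPSD_iff_exists_odd_coeff hsq hle hlt).2 hodd⟩

/-- Let `h₁, h₂` be nonzero, at most one of odd degree, with all roots
of `h₁` of positive valuation and all roots of `h₂` of negative valuation.  Given good
part-square decompositions `hᵢ = qᵢ² + ρᵢ` with `min (t₁, t₂) < 2 v 2`, the induced
decomposition `h₁h₂ = (q₁q₂)² + ρ` is a part-square decomposition with
`t = min (t₁, t₂)` (encoded by cross-addition of valuations) and it is good. -/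
theorem stmt5 {Kbar : Type*} [Field Kbar] [IsAlgClosed Kbar]
    (v : AddValuation Kbar (WithTop ℚ)) (hchar : (2 : Kbar) ≠ 0)
    (hres : ResidueAlgClosed v)
    (h₁ h₂ : Kbar[X]) (hne₁ : h₁ ≠ 0) (hne₂ : h₂ ≠ 0)
    (hoddone : ¬(Odd h₁.natDegree ∧ Odd h₂.natDegree))
    (hr₁ : ∀ x : Kbar, h₁.IsRoot x → 0 < v x)
    (hr₂ : ∀ x : Kbar, h₂.IsRoot x → v x < 0)
    (q₁ ρ₁ q₂ ρ₂ : Kbar[X])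
    (hg₁ : IsGoodPSD v h₁ q₁ ρ₁) (hg₂ : IsGoodPSD v h₂ q₂ ρ₂)
    (hmin : gaussVal v ρ₁ < gaussVal v h₁ + (v 2 + v 2) ∨
            gaussVal v ρ₂ < gaussVal v h₂ + (v 2 + v 2)) :
    ∀ h q ρ : Kbar[X], h = h₁ * h₂ → q = q₁ * q₂ → ρ = h - q ^ 2 →
      IsPSD h q ρ ∧
      gaussVal v ρ + (gaussVal v h₁ + gaussVal v h₂) =
        min (gaussVal v ρ₁ + gaussVal v h₂) (gaussVal v ρ₂ + gaussVal v h₁) +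
          gaussVal v h ∧
      IsGoodPSD v h q ρ :=
  stmt5_general v (fun x => IsAlgClosed.exists_eq_mul_self x) h₁ h₂
    (gaussVal_lt_eraseLead v (IsAlgClosed.splits h₁) hne₁ hr₁)
    (gaussVal_lt_erase_zero v (IsAlgClosed.splits h₂) hne₂ hr₂) hoddone q₁ ρ₁ q₂ ρ₂ hg₁ hg₂ hmin
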